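/- Let ω be a radial weight on 𝔻. Then the following are equivalent: (i) ω belongs to D̂; (ii) for some β>0 the radial weight z ↦ ω̂(z)(1−|z|)^{β−1} belongs to D̂; (iii) for every β>0 the radial weight z ↦ ω̂(z)(1−|z|)^{β−1} belongs to D̂. -/

import Mathlib

open MeasureTheory Real Set Metric

noncomputable section

/-- The tail integral `ω̂(r) = ∫_r^1 ω(t) dt` of a radial weight, as a function of the radius. -/
def tailInt (ω : ℝ → ℝ) (r : ℝ) : ℝ := ∫ t in Ioo r 1, ω t

/-- A radial weight on the unit disc, identified with its profile on `[0,1)`: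
nonnegative, measurable, integrable on `(0,1)`, with strictly positive tail integrals. -/
def IsRadialWeight (ω : ℝ → ℝ) : Prop :=
  Measurable ω ∧ (∀ r, 0 ≤ ω r) ∧ IntegrableOn ω (Ioo (0:ℝ) 1) ∧
    ∀ r ∈ Ico (0:ℝ) 1, 0 < tailInt ω r

/-- The class `D̂` of radial weights whose tail integral satisfies a doubling condition. -/
def Dhat (ω : ℝ → ℝ) : Prop :=
  ∃ C : ℝ, 1 < C ∧ ∀ r ∈ Ico (0:ℝ) 1, tailInt ω r ≤ C * tailInt ω ((1 + r) / 2)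

/-- The class `Ď` of radial weights. -/
def Dcheck (ω : ℝ → ℝ) : Prop :=
  ∃ K : ℝ, 1 < K ∧ ∃ C : ℝ, 1 < C ∧ ∀ r ∈ Ico (0:ℝ) 1,
    C * tailInt ω (1 - (1 - r) / K) ≤ tailInt ω r

/-- The class `𝒟 = D̂ ∩ Ď`. -/
def Dclass (ω : ℝ → ℝ) : Prop := Dhat ω ∧ Dcheck ω

/-- The moment `ω_x = ∫_0^1 r^x ω(r) dr` of a radial weight. -/
def momentW (ω : ℝ → ℝ) (x : ℝ) : ℝ := ∫ r in Ioo (0:ℝ) 1, r ^ x * ω r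

/-- The class `ℳ` of radial weights. -/
def Mclass (ω : ℝ → ℝ) : Prop :=
  ∃ K : ℝ, 1 < K ∧ ∃ C : ℝ, 1 < C ∧ ∀ x : ℝ, 1 ≤ x → C * momentW ω (K * x) ≤ momentW ω x

/-- The maximum modulus `M_∞(r,f)` on the circle of radius `r`. -/
def Minf (f : ℂ → ℂ) (r : ℝ) : ℝ :=
  sSup ((fun z => ‖f z‖) '' sphere (0:ℂ) r)

/-- The integral mean `M_q(r,f)` for `0 < q < ∞`. -/
def Mq (q : ℝ) (f : ℂ → ℂ) (r : ℝ) : ℝ :=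
  ((2 * π)⁻¹ * ∫ θ in (0:ℝ)..(2 * π),
      ‖f ((r : ℂ) * Complex.exp ((θ : ℂ) * Complex.I))‖ ^ q) ^ q⁻¹

/-- `J^p_ω(f) = ∫_0^1 M_∞(r,f)^p ω(r) dr`. -/
def Jp (p : ℝ) (ω : ℝ → ℝ) (f : ℂ → ℂ) : ℝ :=
  ∫ r in Ioo (0:ℝ) 1, Minf f r ^ p * ω r

/-- `‖f‖_{H^p_ω}^p = ∫_𝔻 p²|f|^{p-2}|f'|² ω̂(|z|) dA(z)`, integrand `0` where `f' = 0`. -/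
def HpNormP (p : ℝ) (ω : ℝ → ℝ) (f : ℂ → ℂ) : ℝ :=
  ∫ z in ball (0:ℂ) 1,
    if deriv f z = 0 then 0
    else p ^ 2 * ‖f z‖ ^ (p - 2) * ‖deriv f z‖ ^ 2
        * tailInt ω ‖z‖

/-- `‖f‖_{S^p_ω}^p = ∫_0^1 (∫_{D(0,r)} |f'|² dA)^{p/2} ω(r) dr`. -/
def SpNormP (p : ℝ) (ω : ℝ → ℝ) (f : ℂ → ℂ) : ℝ :=
  ∫ r in Ioo (0:ℝ) 1,
    (∫ z in ball (0:ℂ) r, ‖deriv f z‖ ^ 2) ^ (p / 2) * ω r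

/-- The `k`-th Maclaurin coefficient `f̂(k) = f^{(k)}(0)/k!`. -/
def coefF (f : ℂ → ℂ) (k : ℕ) : ℂ := iteratedDeriv k f 0 / (k.factorial : ℂ)

/-- Weighted Bergman-type integral `∫_𝔻 |f(z)|^p (1-|z|)^x w(|z|) dA(z)`. -/
def Apq (p x : ℝ) (w : ℝ → ℝ) (f : ℂ → ℂ) : ℝ :=
  ∫ z in ball (0:ℂ) 1,
    ‖f z‖ ^ p * (1 - ‖z‖) ^ x * w ‖z‖

/-- Weighted Dirichlet-type integral `∫_𝔻 |f'(z)|^p (1-|z|)^x w(|z|) dA(z)`. -/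
def DirInt (p x : ℝ) (w : ℝ → ℝ) (f : ℂ → ℂ) : ℝ :=
  ∫ z in ball (0:ℂ) 1,
    ‖deriv f z‖ ^ p * (1 - ‖z‖) ^ x * w ‖z‖

/-- The class `𝒮` of normalized univalent functions on the unit disc. -/
def InSclass (f : ℂ → ℂ) : Prop :=
  DifferentiableOn ℂ f (ball (0:ℂ) 1) ∧ InjOn f (ball (0:ℂ) 1) ∧ f 0 = 0 ∧ deriv f 0 = 1

/-!
Only the monotonicity and positivity of `g = ω̂` matter. Put `f(t) = g(t)(1 - t)^{β-1}`.

If `g(t) ≤ C g((1+t)/2)`, then `f(t) ≤ C 2^{β-1} f((1+t)/2)`, because `t ↦ (1+t)/2` halves the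
distance to `1`; integrating over `(r, 1)` and changing variables gives the doubling of `f̂`.

Conversely, let `f̂` be doubling with constant `C`. With `d = (1-r)/2`, the points `2r - 1`, `r`,
`(1+r)/2` have distances `4d`, `2d`, `d` to `1`. Since `g` decreases,
`g(r) ((4d)^β - (2d)^β)/β ≤ f̂(2r-1) ≤ C² f̂((1+r)/2) ≤ C² g((1+r)/2) d^β/β`,
which is the doubling of `g` on `[1/2, 1)`; on `[0, 1/2)` positivity and monotonicity suffice.
-/

/-- The doubling condition at the boundary point `1` for a function on `[0, 1)`. The class `D̂`
consists of the weights whose tail integral satisfies it: `Dhat ω` is definitionally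
`DoublingAtOne (tailInt ω)`. -/
def DoublingAtOne (g : ℝ → ℝ) : Prop :=
  ∃ C : ℝ, 1 < C ∧ ∀ r ∈ Ico (0 : ℝ) 1, g r ≤ C * g ((1 + r) / 2)

/-- The function `g(t)(1-t)^{β-1}`. The shift makes `β` the homogeneity degree in `1 - t` of its
tail integral when `g` is constant. -/
def rpowWeighted (g : ℝ → ℝ) (β t : ℝ) : ℝ := g t * (1 - t) ^ (β - 1)

section TailInt

variable {f : ℝ → ℝ} {r : ℝ}

theorem antitoneOn_tailInt (hf : IntegrableOn f (Ioo r 1))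
    (hf₀ : ∀ᵐ t ∂volume.restrict (Ioo r 1), 0 ≤ f t) : AntitoneOn (tailInt f) (Ico r 1) :=
  fun _ ha _ _ hab =>
    have hsub := Ioo_subset_Ioo_left ha.1
    setIntegral_mono_set (hf.mono_set hsub) (ae_restrict_of_ae_restrict_of_subset hsub hf₀)
      (Ioo_subset_Ioo_left hab).eventuallyLE

theorem tailInt_comp_midpoint (f : ℝ → ℝ) (hr : r ≤ 1) :
    tailInt (fun t => f ((1 + t) / 2)) r = 2 * tailInt f ((1 + r) / 2) := by
  have hsubst := intervalIntegral.integral_comp_add_div (a := r) (b := 1) f two_ne_zero (1 / 2)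
  rw [add_halves] at hsubst
  simp only [← add_div, smul_eq_mul] at hsubst
  rwa [intervalIntegral.integral_of_le hr, intervalIntegral.integral_of_le (by linarith),
    integral_Ioc_eq_integral_Ioo, integral_Ioc_eq_integral_Ioo] at hsubst

theorem integrableOn_comp_midpoint (hr : r ≤ 1) (hf : IntegrableOn f (Ioo ((1 + r) / 2) 1)) :
    IntegrableOn (fun t => f ((1 + t) / 2)) (Ioo r 1) := by
  rw [← intervalIntegrable_iff_integrableOn_Ioo_of_le (by linarith)] at hf ⊢
  convert (hf.comp_mul_right (c := 2⁻¹)).comp_add_left 1 using 2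
  · rw [div_eq_mul_inv]
  all_goals ring

theorem tailInt_le_of_le_midpoint {K : ℝ} (hr : r ≤ 1) (hf : IntegrableOn f (Ioo r 1))
    (h : ∀ t ∈ Ioo r 1, f t ≤ K * f ((1 + t) / 2)) :
    tailInt f r ≤ 2 * K * tailInt f ((1 + r) / 2) := by
  have hmid : IntegrableOn (fun t => f ((1 + t) / 2)) (Ioo r 1) :=
    integrableOn_comp_midpoint hr (hf.mono_set (Ioo_subset_Ioo_left (by linarith)))
  calc tailInt f r
      ≤ ∫ t in Ioo r 1, K * f ((1 + t) / 2) :=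
        setIntegral_mono_on hf (hmid.const_mul K) measurableSet_Ioo h
    _ = K * tailInt (fun t => f ((1 + t) / 2)) r := integral_const_mul _ _
    _ = 2 * K * tailInt f ((1 + r) / 2) := by rw [tailInt_comp_midpoint f hr]; ring

end TailInt

section OneSubRpow

variable {a b β : ℝ}

theorem integrableOn_one_sub_rpow (hβ : 0 < β) (a b : ℝ) :
    IntegrableOn (fun t : ℝ => (1 - t) ^ (β - 1)) (Ioo a b) := by
  rcases le_total a b with hab | hab
  · rw [← intervalIntegrable_iff_integrableOn_Ioo_of_le hab]
    simpa using (intervalIntegral.intervalIntegrable_rpow' (a := 1 - a) (b := 1 - b)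
      (r := β - 1) (by linarith)).comp_sub_left 1
  · simp [Ioo_eq_empty_of_le hab]

theorem setIntegral_one_sub_rpow (hβ : 0 < β) (hab : a ≤ b) :
    ∫ t in Ioo a b, (1 - t) ^ (β - 1) = ((1 - a) ^ β - (1 - b) ^ β) / β := by
  rw [← integral_Ioc_eq_integral_Ioo, ← intervalIntegral.integral_of_le hab,
    intervalIntegral.integral_comp_sub_left (fun x : ℝ => x ^ (β - 1)) 1,
    integral_rpow (Or.inl (by linarith)), sub_add_cancel]

end OneSubRpow

section RpowWeighted

variable {g : ℝ → ℝ} {a b β : ℝ}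

theorem rpowWeighted_nonneg (hg₀ : ∀ t ∈ Ico a 1, 0 ≤ g t) :
    ∀ t ∈ Ico a 1, 0 ≤ rpowWeighted g β t :=
  fun t ht => mul_nonneg (hg₀ t ht) (rpow_nonneg (sub_nonneg.2 ht.2.le) _)

theorem integrableOn_rpowWeighted (hg : AntitoneOn g (Ico a 1)) (hg₀ : ∀ t ∈ Ico a 1, 0 ≤ g t)
    (hβ : 0 < β) : IntegrableOn (rpowWeighted g β) (Ioo a 1) := by
  have hmeas : AEMeasurable g (volume.restrict (Ioo a 1)) :=
    aemeasurable_restrict_of_antitoneOn measurableSet_Ioo (hg.mono Ioo_subset_Ico_self)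
  refine Integrable.bdd_mul (c := g a) (integrableOn_one_sub_rpow hβ a 1)
    hmeas.aestronglyMeasurable ?_
  filter_upwards [ae_restrict_mem measurableSet_Ioo] with t ht
  have ht' := Ioo_subset_Ico_self ht
  rw [norm_of_nonneg (hg₀ t ht')]
  exact hg ⟨le_rfl, ht.1.trans ht.2⟩ ht' ht.1.le

theorem tailInt_rpowWeighted_le (hg : AntitoneOn g (Ico a 1)) (hg₀ : ∀ t ∈ Ico a 1, 0 ≤ g t)
    (hβ : 0 < β) (ha : a < 1) :
    tailInt (rpowWeighted g β) a ≤ g a * ((1 - a) ^ β / β) :=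
  calc tailInt (rpowWeighted g β) a
      ≤ ∫ t in Ioo a 1, g a * (1 - t) ^ (β - 1) :=
        setIntegral_mono_on (integrableOn_rpowWeighted hg hg₀ hβ)
          ((integrableOn_one_sub_rpow hβ a 1).const_mul _) measurableSet_Ioo fun _ ht =>
            mul_le_mul_of_nonneg_right (hg ⟨le_rfl, ha⟩ (Ioo_subset_Ico_self ht) ht.1.le)
              (rpow_nonneg (sub_nonneg.2 ht.2.le) _)
    _ = g a * ((1 - a) ^ β / β) := by
        rw [integral_const_mul, setIntegral_one_sub_rpow hβ ha.le, sub_self,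
          zero_rpow hβ.ne', sub_zero]

theorem le_tailInt_rpowWeighted (hg : AntitoneOn g (Ico a 1)) (hg₀ : ∀ t ∈ Ico a 1, 0 ≤ g t)
    (hβ : 0 < β) (hab : a ≤ b) (hb : b < 1) :
    g b * (((1 - a) ^ β - (1 - b) ^ β) / β) ≤ tailInt (rpowWeighted g β) a := by
  have hint := integrableOn_rpowWeighted hg hg₀ hβ
  have hsub : Ioo a b ⊆ Ioo a 1 := Ioo_subset_Ioo_right hb.le
  calc g b * (((1 - a) ^ β - (1 - b) ^ β) / β)
      = ∫ t in Ioo a b, g b * (1 - t) ^ (β - 1) := by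
        rw [integral_const_mul, setIntegral_one_sub_rpow hβ hab]
    _ ≤ ∫ t in Ioo a b, rpowWeighted g β t :=
        setIntegral_mono_on ((integrableOn_one_sub_rpow hβ a b).const_mul _) (hint.mono_set hsub)
          measurableSet_Ioo fun t ht =>
            mul_le_mul_of_nonneg_right (hg (Ioo_subset_Ico_self (hsub ht)) ⟨hab, hb⟩ ht.2.le)
              (rpow_nonneg (sub_nonneg.2 (hsub ht).2.le) _)
    _ ≤ tailInt (rpowWeighted g β) a :=
        setIntegral_mono_set hint
          (ae_restrict_of_forall_mem measurableSet_Ioo fun t ht =>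
            rpowWeighted_nonneg hg₀ t (Ioo_subset_Ico_self ht))
          hsub.eventuallyLE

theorem rpowWeighted_le_midpoint {C t : ℝ} (ht : t ≤ 1) (h : g t ≤ C * g ((1 + t) / 2)) :
    rpowWeighted g β t ≤ C * 2 ^ (β - 1) * rpowWeighted g β ((1 + t) / 2) :=
  calc rpowWeighted g β t
      ≤ C * g ((1 + t) / 2) * (1 - t) ^ (β - 1) :=
        mul_le_mul_of_nonneg_right h (rpow_nonneg (sub_nonneg.2 ht) _)
    _ = C * g ((1 + t) / 2) * (2 * (1 - (1 + t) / 2)) ^ (β - 1) := by ring_nf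
    _ = C * 2 ^ (β - 1) * rpowWeighted g β ((1 + t) / 2) := by
        rw [mul_rpow zero_le_two (by linarith), rpowWeighted]; ring

theorem DoublingAtOne.dhat_rpowWeighted (h : DoublingAtOne g) (hβ : 0 < β)
    (hint : IntegrableOn (rpowWeighted g β) (Ioo 0 1)) : Dhat (rpowWeighted g β) := by
  obtain ⟨C, hC, hdoubling⟩ := h
  refine ⟨C * 2 ^ β, one_lt_mul_of_lt_of_le hC (one_le_rpow one_le_two hβ.le), fun r hr => ?_⟩
  calc tailInt (rpowWeighted g β) r
      ≤ 2 * (C * 2 ^ (β - 1)) * tailInt (rpowWeighted g β) ((1 + r) / 2) :=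
        tailInt_le_of_le_midpoint hr.2.le (hint.mono_set (Ioo_subset_Ioo_left hr.1)) fun t ht =>
          rpowWeighted_le_midpoint ht.2.le (hdoubling t ⟨hr.1.trans ht.1.le, ht.2⟩)
    _ = C * 2 ^ β * tailInt (rpowWeighted g β) ((1 + r) / 2) := by
        rw [rpow_sub_one two_ne_zero]; ring

theorem le_midpoint_of_tailInt_rpowWeighted_le {C r : ℝ} (hr : r < 1)
    (hg : AntitoneOn g (Ico (2 * r - 1) 1)) (hg₀ : ∀ t ∈ Ico (2 * r - 1) 1, 0 ≤ g t) (hβ : 0 < β)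
    (hC : 0 ≤ C) (h : tailInt (rpowWeighted g β) (2 * r - 1) ≤
      C * tailInt (rpowWeighted g β) ((1 + r) / 2)) :
    g r ≤ C / (4 ^ β - 2 ^ β) * g ((1 + r) / 2) := by
  have hsub : Ico ((1 + r) / 2) 1 ⊆ Ico (2 * r - 1) 1 := Ico_subset_Ico_left (by linarith)
  have hlower := le_tailInt_rpowWeighted hg hg₀ hβ (show 2 * r - 1 ≤ r by linarith) hr
  have hupper := tailInt_rpowWeighted_le (hg.mono hsub) (fun t ht => hg₀ t (hsub ht)) hβ
    (by linarith)
  obtain ⟨d, hd, rfl⟩ : ∃ d, 0 < d ∧ r = 1 - 2 * d := ⟨(1 - r) / 2, by linarith, by ring⟩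
  have hscale : (1 - (2 * (1 - 2 * d) - 1)) ^ β - (1 - (1 - 2 * d)) ^ β =
      (4 ^ β - 2 ^ β) * d ^ β := by
    rw [show 1 - (2 * (1 - 2 * d) - 1) = 4 * d by ring, sub_sub_cancel,
      mul_rpow (by norm_num) hd.le, mul_rpow (by norm_num) hd.le, sub_mul]
  have hdist : 1 - (1 + (1 - 2 * d)) / 2 = d := by ring
  rw [hscale] at hlower
  rw [hdist] at hupper
  have hgap : 0 < (4 : ℝ) ^ β - 2 ^ β :=
    sub_pos.2 (rpow_lt_rpow zero_le_two (by norm_num) hβ)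
  rw [div_mul_eq_mul_div, le_div_iff₀ hgap]
  refine le_of_mul_le_mul_right ?_ (div_pos (rpow_pos_of_pos hd β) hβ)
  calc g (1 - 2 * d) * (4 ^ β - 2 ^ β) * (d ^ β / β)
      = g (1 - 2 * d) * ((4 ^ β - 2 ^ β) * d ^ β / β) := by ring
    _ ≤ C * tailInt (rpowWeighted g β) ((1 + (1 - 2 * d)) / 2) := hlower.trans h
    _ ≤ C * (g ((1 + (1 - 2 * d)) / 2) * (d ^ β / β)) := mul_le_mul_of_nonneg_left hupper hC
    _ = C * g ((1 + (1 - 2 * d)) / 2) * (d ^ β / β) := by ring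

end RpowWeighted

section DoublingAtOne

variable {g : ℝ → ℝ} {β : ℝ}

theorem doublingAtOne_of_forall_mem_Ico {a C : ℝ} (hg : AntitoneOn g (Ico 0 1))
    (hpos : ∀ t ∈ Ico (0 : ℝ) 1, 0 < g t) (ha : a ∈ Ico (0 : ℝ) 1)
    (h : ∀ r ∈ Ico a 1, g r ≤ C * g ((1 + r) / 2)) : DoublingAtOne g := by
  obtain ⟨ha₀, ha₁⟩ := ha
  have ha' : (1 + a) / 2 ∈ Ico (0 : ℝ) 1 := ⟨by linarith, by linarith⟩
  set B := g 0 / g ((1 + a) / 2) with hB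
  refine ⟨max (max C B) 2, lt_max_of_lt_right one_lt_two, fun r ⟨hr₀, hr₁⟩ => ?_⟩
  have hr' : (1 + r) / 2 ∈ Ico (0 : ℝ) 1 := ⟨by linarith, by linarith⟩
  suffices g r ≤ max C B * g ((1 + r) / 2) from
    this.trans (mul_le_mul_of_nonneg_right (le_max_left _ _) (hpos _ hr').le)
  rcases le_or_gt a r with har | hra
  · exact (h r ⟨har, hr₁⟩).trans
      (mul_le_mul_of_nonneg_right (le_max_left _ _) (hpos _ hr').le)
  · have hB₀ : 0 ≤ B := (div_pos (hpos 0 ⟨le_rfl, one_pos⟩) (hpos _ ha')).le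
    calc g r ≤ g 0 := hg ⟨le_rfl, one_pos⟩ ⟨hr₀, hr₁⟩ hr₀
      _ = B * g ((1 + a) / 2) := by rw [hB, div_mul_cancel₀ _ (hpos _ ha').ne']
      _ ≤ B * g ((1 + r) / 2) := mul_le_mul_of_nonneg_left (hg hr' ha' (by linarith)) hB₀
      _ ≤ max C B * g ((1 + r) / 2) :=
        mul_le_mul_of_nonneg_right (le_max_right _ _) (hpos _ hr').le

theorem doublingAtOne_of_dhat_rpowWeighted (hg : AntitoneOn g (Ico 0 1))
    (hpos : ∀ t ∈ Ico (0 : ℝ) 1, 0 < g t) (hβ : 0 < β) (h : Dhat (rpowWeighted g β)) :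
    DoublingAtOne g := by
  obtain ⟨C, hC, hdoubling⟩ := h
  refine doublingAtOne_of_forall_mem_Ico (a := 1 / 2) (C := C * C / (4 ^ β - 2 ^ β)) hg hpos
    ⟨by norm_num, by norm_num⟩ fun r ⟨hr, hr₁⟩ => ?_
  have hsub : Ico (2 * r - 1) 1 ⊆ Ico 0 1 := Ico_subset_Ico_left (by linarith)
  refine le_midpoint_of_tailInt_rpowWeighted_le hr₁ (hg.mono hsub)
    (fun t ht => (hpos t (hsub ht)).le) hβ (by positivity) ?_
  calc tailInt (rpowWeighted g β) (2 * r - 1)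
      ≤ C * tailInt (rpowWeighted g β) ((1 + (2 * r - 1)) / 2) :=
        hdoubling _ ⟨by linarith, by linarith⟩
    _ = C * tailInt (rpowWeighted g β) r := by ring_nf
    _ ≤ C * (C * tailInt (rpowWeighted g β) ((1 + r) / 2)) := by
        gcongr
        exact hdoubling r ⟨by linarith, hr₁⟩
    _ = C * C * tailInt (rpowWeighted g β) ((1 + r) / 2) := by ring

theorem doublingAtOne_iff_dhat_rpowWeighted (hg : AntitoneOn g (Ico 0 1))
    (hpos : ∀ t ∈ Ico (0 : ℝ) 1, 0 < g t) (hβ : 0 < β) :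
    DoublingAtOne g ↔ Dhat (rpowWeighted g β) :=
  ⟨fun h => h.dhat_rpowWeighted hβ (integrableOn_rpowWeighted hg (fun t ht => (hpos t ht).le) hβ),
    doublingAtOne_of_dhat_rpowWeighted hg hpos hβ⟩

end DoublingAtOne

theorem statement7_general {g : ℝ → ℝ} (hg : AntitoneOn g (Ico 0 1))
    (hpos : ∀ t ∈ Ico (0 : ℝ) 1, 0 < g t) :
    (DoublingAtOne g ↔ ∃ β : ℝ, 0 < β ∧ Dhat (rpowWeighted g β)) ∧
    (DoublingAtOne g ↔ ∀ β : ℝ, 0 < β → Dhat (rpowWeighted g β)) :=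
  have hiff {β : ℝ} (hβ : 0 < β) := doublingAtOne_iff_dhat_rpowWeighted hg hpos hβ
  ⟨⟨fun h => ⟨1, one_pos, (hiff one_pos).1 h⟩, fun ⟨_, hβ, h⟩ => (hiff hβ).2 h⟩,
    ⟨fun h _ hβ => (hiff hβ).1 h, fun h => (hiff one_pos).2 (h 1 one_pos)⟩⟩

/-- Lemma A(v): `ω ∈ D̂` iff `ω̂(t)(1-t)^{β-1} ∈ D̂` for some `β > 0`,
iff this holds for every `β > 0`. -/
theorem statement7 (ω : ℝ → ℝ) (hω : IsRadialWeight ω) :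
    (Dhat ω ↔ ∃ β : ℝ, 0 < β ∧ Dhat (fun t => tailInt ω t * (1 - t) ^ (β - 1))) ∧
    (Dhat ω ↔ ∀ β : ℝ, 0 < β → Dhat (fun t => tailInt ω t * (1 - t) ^ (β - 1))) :=
  statement7_general (antitoneOn_tailInt hω.2.2.1 (.of_forall hω.2.1)) hω.2.2.2
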